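/- A hemiring S is h-hemiregular if and only if for every right h-ideal A and every left h-ideal B of S, the h-closure of AB equals A ∩ B. -/

import Mathlib

open scoped BigOperators

variable {S : Type*}

def IsFuzzySet (μ : S → ℝ) : Prop := ∀ x, μ x ∈ Set.Icc (0:ℝ) 1

def IsFuzzyLeftHIdeal [NonUnitalSemiring S] (μ : S → ℝ) : Prop :=
  IsFuzzySet μ ∧
  (∀ x y : S, min (μ x) (μ y) ≤ μ (x + y)) ∧
  (∀ x y : S, μ y ≤ μ (x * y)) ∧
  (∀ a b x z : S, x + a + z = b + z → min (μ a) (μ b) ≤ μ x)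

def IsFuzzyRightHIdeal [NonUnitalSemiring S] (μ : S → ℝ) : Prop :=
  IsFuzzySet μ ∧
  (∀ x y : S, min (μ x) (μ y) ≤ μ (x + y)) ∧
  (∀ x y : S, μ x ≤ μ (x * y)) ∧
  (∀ a b x z : S, x + a + z = b + z → min (μ a) (μ b) ≤ μ x)

/-- The h-product of two fuzzy sets (equal to 0 when no representation exists). -/
noncomputable def hProd [NonUnitalSemiring S] (μ ν : S → ℝ) (x : S) : ℝ :=
  sSup (insert 0 {r | ∃ a₁ b₁ a₂ b₂ z : S, x + a₁ * b₁ + z = a₂ * b₂ + z ∧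
    r = min (min (μ a₁) (μ a₂)) (min (ν b₁) (ν b₂))})

def IsLeftHIdeal [NonUnitalSemiring S] (A : Set S) : Prop :=
  A.Nonempty ∧ (∀ a ∈ A, ∀ b ∈ A, a + b ∈ A) ∧ (∀ s : S, ∀ a ∈ A, s * a ∈ A) ∧
  (∀ x z a b : S, a ∈ A → b ∈ A → x + a + z = b + z → x ∈ A)

def IsRightHIdeal [NonUnitalSemiring S] (A : Set S) : Prop :=
  A.Nonempty ∧ (∀ a ∈ A, ∀ b ∈ A, a + b ∈ A) ∧ (∀ s : S, ∀ a ∈ A, a * s ∈ A) ∧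
  (∀ x z a b : S, a ∈ A → b ∈ A → x + a + z = b + z → x ∈ A)

/-- h-closure of a subset of a hemiring. -/
def hCl [NonUnitalSemiring S] (A : Set S) : Set S :=
  {x | ∃ a₁ ∈ A, ∃ a₂ ∈ A, ∃ z : S, x + a₁ + z = a₂ + z}

/-- AB : the set of finite (nonempty) sums of products ab, a ∈ A, b ∈ B. -/
def setProd [NonUnitalSemiring S] (A B : Set S) : Set S :=
  {x | ∃ (n : ℕ) (a b : Fin (n + 1) → S), (∀ i, a i ∈ A) ∧ (∀ i, b i ∈ B) ∧
    x = ∑ i, a i * b i}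

def IsPrimeLeftHIdeal [NonUnitalSemiring S] (P : Set S) : Prop :=
  IsLeftHIdeal P ∧ P ≠ Set.univ ∧
  ∀ A B : Set S, IsLeftHIdeal A → IsLeftHIdeal B → setProd A B ⊆ P → A ⊆ P ∨ B ⊆ P

def IsPrimeFuzzyLeftHIdeal [NonUnitalSemiring S] (ζ : S → ℝ) : Prop :=
  IsFuzzyLeftHIdeal ζ ∧ (∃ x y : S, ζ x ≠ ζ y) ∧
  ∀ μ ν : S → ℝ, IsFuzzyLeftHIdeal μ → IsFuzzyLeftHIdeal ν →
    (∀ x, hProd μ ν x ≤ ζ x) → (∀ x, μ x ≤ ζ x) ∨ (∀ x, ν x ≤ ζ x)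

def IsHHemiregular (S : Type*) [NonUnitalSemiring S] : Prop :=
  ∀ a : S, ∃ x₁ x₂ z : S, a + a * x₁ * a + z = a * x₂ * a + z

/-!
Products and h-closures are taken of additive submonoids. An element `a` of a right h-ideal `A`
and a left h-ideal `B` satisfies `aSa ⊆ AB`, which gives the nontrivial inclusion when `S` is
h-hemiregular. Conversely, let `P = ℕa`. The h-closures of `P + PS` and `P + SP` are a right and a
left h-ideal containing `P`, and the product of two closures lies in the closure of the product, so
`P` lies in the closure of `PP + PSP`. Multiplying this inclusion by `P` puts `PP` inside the
closure of `PPP + PPSP ⊆ PSP`. Hence `P` itself lies in the closure of `PSP = aSa`.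
-/

open scoped Pointwise

section AddCommMonoid

variable {M N : Type*} [AddCommMonoid M] [AddCommMonoid N]

/-- The cancellation property that distinguishes h-ideals among ideals, for an additive submonoid
of an arbitrary commutative monoid. -/
def IsHClosed (P : AddSubmonoid M) : Prop :=
  ∀ ⦃x z a b : M⦄, a ∈ P → b ∈ P → x + a + z = b + z → x ∈ P

theorem IsHClosed.comap {P : AddSubmonoid N} (hP : IsHClosed P) (f : M →+ N) :
    IsHClosed (P.comap f) := by
  intro x z a b ha hb h
  exact hP ha hb (by simpa only [map_add] using congrArg f h)

/-- The h-closure of an additive submonoid of a commutative monoid: the construction `hCl` of the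
paper, which needs no multiplication. -/
def hClosureAddSubmonoid (P : AddSubmonoid M) : AddSubmonoid M where
  carrier := {x | ∃ a ∈ P, ∃ b ∈ P, ∃ z, x + a + z = b + z}
  zero_mem' := ⟨0, P.zero_mem, 0, P.zero_mem, 0, by simp⟩
  add_mem' := by
    rintro x y ⟨a, ha, b, hb, z, h⟩ ⟨c, hc, d, hd, w, h'⟩
    refine ⟨a + c, P.add_mem ha hc, b + d, P.add_mem hb hd, z + w, ?_⟩
    calc x + y + (a + c) + (z + w) = (x + a + z) + (y + c + w) := by abel
      _ = (b + z) + (d + w) := by rw [h, h']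
      _ = b + d + (z + w) := by abel

theorem le_hClosureAddSubmonoid (P : AddSubmonoid M) : P ≤ hClosureAddSubmonoid P :=
  fun x hx ↦ ⟨0, P.zero_mem, x, hx, 0, by simp⟩

theorem isHClosed_hClosureAddSubmonoid (P : AddSubmonoid M) :
    IsHClosed (hClosureAddSubmonoid P) := by
  rintro x z a b ⟨a₁, ha₁, a₂, ha₂, u, hu⟩ ⟨b₁, hb₁, b₂, hb₂, v, hv⟩ h
  refine ⟨a₂ + b₁, P.add_mem ha₂ hb₁, a₁ + b₂, P.add_mem ha₁ hb₂, z + u + v, ?_⟩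
  calc x + (a₂ + b₁) + (z + u + v) = x + (a₂ + u) + z + b₁ + v := by abel
    _ = (x + a + z) + a₁ + u + b₁ + v := by rw [← hu]; abel
    _ = (b + b₁ + v) + a₁ + z + u := by rw [h]; abel
    _ = a₁ + b₂ + (z + u + v) := by rw [hv]; abel

theorem hClosureAddSubmonoid_le {P Q : AddSubmonoid M} (hPQ : P ≤ Q) (hQ : IsHClosed Q) :
    hClosureAddSubmonoid P ≤ Q := by
  rintro x ⟨a, ha, b, hb, z, h⟩
  exact hQ (hPQ ha) (hPQ hb) h

/-- `hClosureAddSubmonoid` as a closure operator, with `IsHClosed` as its predicate for closed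
elements. -/
def hClosure : ClosureOperator (AddSubmonoid M) :=
  .ofPred hClosureAddSubmonoid IsHClosed le_hClosureAddSubmonoid isHClosed_hClosureAddSubmonoid
    fun _ _ ↦ hClosureAddSubmonoid_le

theorem isHClosed_hClosure (P : AddSubmonoid M) : IsHClosed (hClosure P) :=
  hClosure.isClosed_closure P

end AddCommMonoid

theorem hClosure_mul_hClosure_le [NonUnitalNonAssocSemiring S] (P Q : AddSubmonoid S) :
    hClosure P * hClosure Q ≤ hClosure (P * Q) := by
  have hPQ : IsHClosed (hClosure (P * Q)) := isHClosed_hClosure _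
  have le_comap_mulRight {q : S} (hq : q ∈ Q) :
      hClosure P ≤ (hClosure (P * Q)).comap (AddMonoidHom.mulRight q) :=
    hClosure.closure_min
      (fun _ hp ↦ hClosure.le_closure _ (AddSubmonoid.mul_mem_mul hp hq)) (hPQ.comap _)
  have le_comap_mulLeft {p : S} (hp : p ∈ hClosure P) :
      hClosure Q ≤ (hClosure (P * Q)).comap (AddMonoidHom.mulLeft p) :=
    hClosure.closure_min (fun _ hq ↦ le_comap_mulRight hq hp) (hPQ.comap _)
  exact AddSubmonoid.mul_le.2 fun _ hp _ hq ↦ le_comap_mulLeft hp hq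

section NonUnitalSemiring

variable [NonUnitalSemiring S] {A B : Set S}

theorem setProd_coe (P Q : AddSubmonoid S) :
    setProd (P : Set S) Q = (P * Q : AddSubmonoid S) := by
  refine Set.Subset.antisymm ?_ fun x hx ↦ ?_
  · rintro _ ⟨n, a, b, ha, hb, rfl⟩
    exact sum_mem fun i _ ↦ AddSubmonoid.mul_mem_mul (ha i) (hb i)
  · refine AddSubmonoid.mul_induction_on hx (fun p hp q hq ↦ ?_) ?_
    · exact ⟨0, fun _ ↦ p, fun _ ↦ q, fun _ ↦ hp, fun _ ↦ hq, by simp⟩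
    · rintro _ _ ⟨m, a, b, ha, hb, rfl⟩ ⟨n, c, d, hc, hd, rfl⟩
      refine ⟨m + 1 + n, Fin.append (n := n + 1) a c, Fin.append (n := n + 1) b d, ?_, ?_, ?_⟩
      · exact Fin.addCases (m := m + 1) (n := n + 1) (by simpa using ha) (by simpa using hc)
      · exact Fin.addCases (m := m + 1) (n := n + 1) (by simpa using hb) (by simpa using hd)
      · exact .symm <| (Fin.sum_univ_add (a := m + 1) (b := n + 1) _).trans (by simp)

theorem hCl_setProd_coe (P Q : AddSubmonoid S) :
    hCl (setProd (P : Set S) Q) = hClosure (P * Q) := by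
  rw [setProd_coe]
  rfl

theorem isRightHIdeal_iff :
    IsRightHIdeal A ↔ ∃ P : AddSubmonoid S, P * ⊤ ≤ P ∧ IsHClosed P ∧ (P : Set S) = A := by
  constructor
  · rintro ⟨⟨a, ha⟩, hadd, hmul, hcl⟩
    let P : AddSubmonoid S :=
      { carrier := A
        zero_mem' := by simpa using hmul 0 a ha
        add_mem' := fun hx hy ↦ hadd _ hx _ hy }
    exact ⟨P, AddSubmonoid.mul_le.2 fun x hx s _ ↦ hmul s x hx, hcl, rfl⟩
  · rintro ⟨P, hmul, hcl, rfl⟩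
    exact ⟨⟨0, P.zero_mem⟩, fun _ ha _ hb ↦ P.add_mem ha hb,
      fun s a ha ↦ hmul (AddSubmonoid.mul_mem_mul ha (AddSubmonoid.mem_top s)), hcl⟩

theorem isLeftHIdeal_iff :
    IsLeftHIdeal B ↔ ∃ Q : AddSubmonoid S, ⊤ * Q ≤ Q ∧ IsHClosed Q ∧ (Q : Set S) = B := by
  constructor
  · rintro ⟨⟨b, hb⟩, hadd, hmul, hcl⟩
    let Q : AddSubmonoid S :=
      { carrier := B
        zero_mem' := by simpa using hmul 0 b hb
        add_mem' := fun hx hy ↦ hadd _ hx _ hy }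
    exact ⟨Q, AddSubmonoid.mul_le.2 fun s _ x hx ↦ hmul s x hx, hcl, rfl⟩
  · rintro ⟨Q, hmul, hcl, rfl⟩
    exact ⟨⟨0, Q.zero_mem⟩, fun _ ha _ hb ↦ Q.add_mem ha hb,
      fun s b hb ↦ hmul (AddSubmonoid.mul_mem_mul (AddSubmonoid.mem_top s) hb), hcl⟩

theorem isRightHIdeal_hClosure {P : AddSubmonoid S} (hP : P * ⊤ ≤ P) :
    IsRightHIdeal (hClosure P : Set S) := by
  refine isRightHIdeal_iff.2 ⟨hClosure P, ?_, isHClosed_hClosure P, rfl⟩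
  calc hClosure P * ⊤ = hClosure P * hClosure ⊤ := by rw [hClosure.closure_top]
    _ ≤ hClosure (P * ⊤) := hClosure_mul_hClosure_le P ⊤
    _ ≤ hClosure P := hClosure.monotone hP

theorem isLeftHIdeal_hClosure {Q : AddSubmonoid S} (hQ : ⊤ * Q ≤ Q) :
    IsLeftHIdeal (hClosure Q : Set S) := by
  refine isLeftHIdeal_iff.2 ⟨hClosure Q, ?_, isHClosed_hClosure Q, rfl⟩
  calc ⊤ * hClosure Q = hClosure ⊤ * hClosure Q := by rw [hClosure.closure_top]
    _ ≤ hClosure (⊤ * Q) := hClosure_mul_hClosure_le ⊤ Q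
    _ ≤ hClosure Q := hClosure.monotone hQ

theorem isRightHIdeal_hClosure_sup_mul_top (P : AddSubmonoid S) :
    IsRightHIdeal (hClosure (P ⊔ P * ⊤) : Set S) := by
  refine isRightHIdeal_hClosure ?_
  rw [AddSubmonoid.sup_mul, mul_assoc]
  exact sup_le le_sup_right (le_sup_of_le_right (AddSubmonoid.mul_le_mul le_rfl le_top))

theorem isLeftHIdeal_hClosure_sup_top_mul (P : AddSubmonoid S) :
    IsLeftHIdeal (hClosure (P ⊔ ⊤ * P) : Set S) := by
  refine isLeftHIdeal_hClosure ?_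
  rw [AddSubmonoid.mul_sup, ← mul_assoc]
  exact sup_le le_sup_right (le_sup_of_le_right (AddSubmonoid.mul_le_mul le_top le_rfl))

theorem sup_mul_top_mul_sup_top_mul_le (P : AddSubmonoid S) :
    (P ⊔ P * ⊤) * (P ⊔ ⊤ * P) ≤ P * P ⊔ P * ⊤ * P := by
  have absorb : P * ⊤ * (⊤ * P) ≤ P * ⊤ * P := by
    rw [← mul_assoc, mul_assoc P]
    gcongr
    exact le_top
  rw [AddSubmonoid.sup_mul, AddSubmonoid.mul_sup, AddSubmonoid.mul_sup, ← mul_assoc P ⊤ P]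
  exact sup_le le_rfl (sup_le le_sup_right (le_sup_of_le_right absorb))

theorem le_hClosure_mul_top_mul_of_le_hClosure_sup {P : AddSubmonoid S}
    (hP : P ≤ hClosure (P * P ⊔ P * ⊤ * P)) : P ≤ hClosure (P * ⊤ * P) := by
  have mul_sup_le : P * (P * P ⊔ P * ⊤ * P) ≤ P * ⊤ * P := by
    rw [AddSubmonoid.mul_sup, ← mul_assoc, ← mul_assoc, ← mul_assoc, mul_assoc P P ⊤]
    exact sup_le (by gcongr; exact le_top) (by gcongr; exact le_top)
  have mul_self_le : P * P ≤ hClosure (P * ⊤ * P) :=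
    calc P * P ≤ hClosure P * hClosure (P * P ⊔ P * ⊤ * P) :=
          AddSubmonoid.mul_le_mul (hClosure.le_closure P) hP
      _ ≤ hClosure (P * (P * P ⊔ P * ⊤ * P)) := hClosure_mul_hClosure_le _ _
      _ ≤ hClosure (P * ⊤ * P) := hClosure.monotone mul_sup_le
  exact hP.trans <|
    hClosure.closure_min (sup_le mul_self_le (hClosure.le_closure _)) (isHClosed_hClosure _)

theorem mem_closure_singleton_mul_top_mul_closure_singleton {a x : S} :
    x ∈ AddSubmonoid.closure {a} * ⊤ * AddSubmonoid.closure {a} ↔ ∃ s, a * s * a = x := by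
  let sandwich : S →+ S := (AddMonoidHom.mulRight a).comp (AddMonoidHom.mulLeft a)
  have closure_eq : AddSubmonoid.closure {a} * ⊤ * AddSubmonoid.closure {a} =
      AddMonoidHom.mrange sandwich := by
    rw [← AddSubmonoid.closure_univ, AddSubmonoid.closure_mul_closure,
      AddSubmonoid.closure_mul_closure, Set.singleton_mul, Set.mul_singleton, Set.image_image,
      Set.image_univ]
    exact AddSubmonoid.closure_eq (AddMonoidHom.mrange sandwich)
  rw [closure_eq]
  rfl

theorem isHHemiregular_iff_le_hClosure :
    IsHHemiregular S ↔ ∀ P : AddSubmonoid S, P ≤ hClosure (P * ⊤ * P) := by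
  constructor
  · intro hS P a ha
    obtain ⟨x₁, x₂, z, h⟩ := hS a
    have mem (s : S) : a * s * a ∈ P * ⊤ * P :=
      AddSubmonoid.mul_mem_mul (AddSubmonoid.mul_mem_mul ha (AddSubmonoid.mem_top s)) ha
    exact ⟨_, mem x₁, _, mem x₂, z, h⟩
  · intro hS a
    obtain ⟨b, hb, c, hc, z, h⟩ :=
      hS (AddSubmonoid.closure {a}) (AddSubmonoid.subset_closure (Set.mem_singleton a))
    obtain ⟨x₁, rfl⟩ := mem_closure_singleton_mul_top_mul_closure_singleton.1 hb
    obtain ⟨x₂, rfl⟩ := mem_closure_singleton_mul_top_mul_closure_singleton.1 hc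
    exact ⟨x₁, x₂, z, h⟩

theorem IsHHemiregular.hClosure_mul_eq_inf (hS : IsHHemiregular S) {P Q : AddSubmonoid S}
    (hP : P * ⊤ ≤ P) (hP_closed : IsHClosed P) (hQ : ⊤ * Q ≤ Q) (hQ_closed : IsHClosed Q) :
    hClosure (P * Q) = P ⊓ Q := by
  apply le_antisymm
  · have mul_le_left : P * Q ≤ P := (AddSubmonoid.mul_le_mul le_rfl le_top).trans hP
    have mul_le_right : P * Q ≤ Q := (AddSubmonoid.mul_le_mul le_top le_rfl).trans hQ
    exact le_inf (hClosure.closure_min mul_le_left hP_closed)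
      (hClosure.closure_min mul_le_right hQ_closed)
  · have sandwich_le : (P ⊓ Q) * ⊤ * (P ⊓ Q) ≤ P * Q :=
      calc (P ⊓ Q) * ⊤ * (P ⊓ Q) ≤ P * ⊤ * Q := by
            gcongr
            exacts [inf_le_left, inf_le_right]
        _ ≤ P * Q := AddSubmonoid.mul_le_mul hP le_rfl
    exact (isHHemiregular_iff_le_hClosure.1 hS (P ⊓ Q)).trans (hClosure.monotone sandwich_le)

theorem le_hClosure_mul_top_mul_of_hCl_setProd_eq_inter
    (hS : ∀ A B : Set S, IsRightHIdeal A → IsLeftHIdeal B → hCl (setProd A B) = A ∩ B)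
    (P : AddSubmonoid S) : P ≤ hClosure (P * ⊤ * P) := by
  set R := P ⊔ P * ⊤
  set L := P ⊔ ⊤ * P
  have inf_eq : hClosure (hClosure R * hClosure L) = hClosure R ⊓ hClosure L := by
    refine SetLike.coe_injective ?_
    rw [← hCl_setProd_coe, AddSubmonoid.coe_inf]
    exact hS _ _ (isRightHIdeal_hClosure_sup_mul_top P) (isLeftHIdeal_hClosure_sup_top_mul P)
  refine le_hClosure_mul_top_mul_of_le_hClosure_sup ?_
  calc P ≤ hClosure R ⊓ hClosure L :=
        le_inf (le_sup_left.trans (hClosure.le_closure R))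
          (le_sup_left.trans (hClosure.le_closure L))
    _ = hClosure (hClosure R * hClosure L) := inf_eq.symm
    _ ≤ hClosure (R * L) :=
        hClosure.closure_min (hClosure_mul_hClosure_le R L) (isHClosed_hClosure _)
    _ ≤ hClosure (P * P ⊔ P * ⊤ * P) := hClosure.monotone (sup_mul_top_mul_sup_top_mul_le P)

end NonUnitalSemiring

theorem hHemiregular_iff_hCl_setProd_eq_inter [NonUnitalSemiring S] :
    IsHHemiregular S ↔
      ∀ A B : Set S, IsRightHIdeal A → IsLeftHIdeal B →
        hCl (setProd A B) = A ∩ B := by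
  constructor
  · intro hS A B hA hB
    obtain ⟨P, hP, hP_closed, rfl⟩ := isRightHIdeal_iff.1 hA
    obtain ⟨Q, hQ, hQ_closed, rfl⟩ := isLeftHIdeal_iff.1 hB
    rw [hCl_setProd_coe, hS.hClosure_mul_eq_inf hP hP_closed hQ hQ_closed, AddSubmonoid.coe_inf]
  · intro hS
    exact isHHemiregular_iff_le_hClosure.2 (le_hClosure_mul_top_mul_of_hCl_setProd_eq_inter hS)
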